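/- Fix integers k ≥ s ≥ 1 with s > k/2, probability distributions p_1, …, p_k on Y, and an integer R ≥ 1. Set a := k − s. Then the abstention probability of consensus sampling satisfies (1 − Z)^R ≤ min over S ⊆ {1,…,k} with |S| = s of (1 − Δ_a(S)/s)^R, where Δ_a(S) := max over J ⊆ S with |J| = a + 1 of Δ(J). -/

import Mathlib

/-!
Any `T` with `|T| = s` and any `J` with `|J| = k - s + 1` have `|T| + |J| > k`, so they share an
index `i`. Hence `min_{j ∈ J} p_j(y) ≤ p_i(y) ≤ ∑_{i ∈ T} p_i(y)`, and minimising over `T` gives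
`min_{j ∈ J} p_j(y) ≤ s * g(y)` for every `y` (`minOver_le_gmin`). Summing over `y` yields
`Δ(J) ≤ s * Z` (`overlap_le`). Since also `Z ≤ 1` (`tsum_gmin_le_one`), the inequality
`0 ≤ 1 - Z ≤ 1 - Δ_a(S) / s` may be raised to the power `R`.
-/

open scoped BigOperators

/-- `p` is a probability distribution: nonnegative and summing to 1. -/
def IsDist {α : Type*} (p : α → ℝ) : Prop := (∀ a, 0 ≤ p a) ∧ HasSum p 1

/-- `g(y) := min over T ⊆ {1,…,k} with |T| = s of avg_T(y)`, the average of the `s`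
smallest of the `k` values `p_1(y), …, p_k(y)`. -/
noncomputable def gmin {Y : Type*} {k : ℕ} (s : ℕ) (p : Fin k → Y → ℝ) (y : Y) : ℝ :=
  sInf {v : ℝ | ∃ T : Finset (Fin k), T.card = s ∧ v = (∑ i ∈ T, p i y) / s}

/-- overlap `Δ(J) = Σ_y min_{i ∈ J} p_i(y)` of the distributions indexed by `J`. -/
noncomputable def overlap {Y : Type*} {k : ℕ} (p : Fin k → Y → ℝ) (J : Finset (Fin k)) : ℝ :=
  ∑' y : Y, sInf {v : ℝ | ∃ i ∈ J, v = p i y}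

section Pointwise

variable {Y : Type*} {k s : ℕ} {p : Fin k → Y → ℝ}

lemma minOver_nonneg (h0 : ∀ i y, 0 ≤ p i y) (J : Finset (Fin k)) (y : Y) :
    0 ≤ sInf {v : ℝ | ∃ i ∈ J, v = p i y} := by
  apply Real.sInf_nonneg
  rintro _ ⟨i, _, rfl⟩
  exact h0 i y

lemma minOver_le (h0 : ∀ i y, 0 ≤ p i y) {J : Finset (Fin k)} {i : Fin k} (hi : i ∈ J) (y : Y) :
    sInf {v : ℝ | ∃ i ∈ J, v = p i y} ≤ p i y := by
  refine csInf_le ⟨0, ?_⟩ ⟨i, hi, rfl⟩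
  rintro _ ⟨j, _, rfl⟩
  exact h0 j y

lemma gmin_nonneg (h0 : ∀ i y, 0 ≤ p i y) (y : Y) : 0 ≤ gmin s p y := by
  apply Real.sInf_nonneg
  rintro _ ⟨T, _, rfl⟩
  exact div_nonneg (Finset.sum_nonneg fun i _ => h0 i y) (Nat.cast_nonneg s)

lemma gmin_le (h0 : ∀ i y, 0 ≤ p i y) {T : Finset (Fin k)} (hT : T.card = s) (y : Y) :
    gmin s p y ≤ (∑ i ∈ T, p i y) / s := by
  refine csInf_le ⟨0, ?_⟩ ⟨T, hT, rfl⟩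
  rintro _ ⟨T, _, rfl⟩
  exact div_nonneg (Finset.sum_nonneg fun i _ => h0 i y) (Nat.cast_nonneg s)

lemma minOver_le_gmin (hs1 : 1 ≤ s) (hsk : s ≤ k) (h0 : ∀ i y, 0 ≤ p i y)
    {J : Finset (Fin k)} (hJ : J.card = (k - s) + 1) (y : Y) :
    sInf {v : ℝ | ∃ i ∈ J, v = p i y} ≤ s * gmin s p y := by
  have hs : (0 : ℝ) < s := by exact_mod_cast hs1
  rw [mul_comm, ← div_le_iff₀ hs]
  obtain ⟨T₀, -, hT₀⟩ := Finset.exists_subset_card_eq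
    (s := (Finset.univ : Finset (Fin k))) (n := s) (by simpa using hsk)
  refine le_csInf ⟨_, T₀, hT₀, rfl⟩ ?_
  rintro _ ⟨T, hT, rfl⟩
  -- `|T| + |J| = k + 1` exceeds the number of indices, so `T` and `J` intersect.
  have hmeet : (T ∩ J).Nonempty := by
    have h1 := Finset.card_union_add_card_inter T J
    have h2 : (T ∪ J).card ≤ k := by simpa using Finset.card_le_univ (T ∪ J)
    rw [← Finset.card_pos]
    omega
  obtain ⟨i, hi⟩ := hmeet
  rw [Finset.mem_inter] at hi
  have := (minOver_le h0 hi.2 y).trans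
    (Finset.single_le_sum (f := fun i => p i y) (fun j _ => h0 j y) hi.1)
  gcongr

end Pointwise

section Summed

variable {Y : Type*} {k s : ℕ} {p : Fin k → Y → ℝ}

lemma hasSum_avg (hs1 : 1 ≤ s) (hp : ∀ i, IsDist (p i)) {T : Finset (Fin k)} (hT : T.card = s) :
    HasSum (fun y => (∑ i ∈ T, p i y) / (s : ℝ)) 1 := by
  have hs : (s : ℝ) ≠ 0 := by exact_mod_cast (by omega : s ≠ 0)
  have h := (hasSum_sum fun i (_ : i ∈ T) => (hp i).2).div_const (s : ℝ)
  simpa [hT, hs] using h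

lemma summable_gmin (hs1 : 1 ≤ s) (hsk : s ≤ k) (hp : ∀ i, IsDist (p i)) :
    Summable (gmin s p) := by
  obtain ⟨T, -, hT⟩ := Finset.exists_subset_card_eq
    (s := (Finset.univ : Finset (Fin k))) (n := s) (by simpa using hsk)
  have h0 : ∀ i y, 0 ≤ p i y := fun i => (hp i).1
  exact Summable.of_nonneg_of_le (gmin_nonneg h0) (gmin_le h0 hT) (hasSum_avg hs1 hp hT).summable

lemma tsum_gmin_le_one (hs1 : 1 ≤ s) (hsk : s ≤ k) (hp : ∀ i, IsDist (p i)) :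
    ∑' y, gmin s p y ≤ 1 := by
  obtain ⟨T, -, hT⟩ := Finset.exists_subset_card_eq
    (s := (Finset.univ : Finset (Fin k))) (n := s) (by simpa using hsk)
  exact hasSum_le (gmin_le (fun i => (hp i).1) hT) (summable_gmin hs1 hsk hp).hasSum
    (hasSum_avg hs1 hp hT)

lemma overlap_le (hs1 : 1 ≤ s) (hsk : s ≤ k) (hp : ∀ i, IsDist (p i))
    {J : Finset (Fin k)} (hJ : J.card = (k - s) + 1) :
    overlap p J ≤ s * ∑' y, gmin s p y := by
  have h0 : ∀ i y, 0 ≤ p i y := fun i => (hp i).1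
  have hg := (summable_gmin hs1 hsk hp).mul_left (s : ℝ)
  rw [← tsum_mul_left]
  have hle := minOver_le_gmin hs1 hsk h0 hJ
  exact Summable.tsum_le_tsum hle (Summable.of_nonneg_of_le (minOver_nonneg h0 J) hle hg) hg

end Summed

/-- **Abstention bound.** If `s > k/2` and `R ≥ 1`, with `a := k − s`, the abstention
probability of consensus sampling satisfies
`(1 − Z)^R ≤ min_{|S| = s} (1 − Δ_a(S)/s)^R`, where
`Δ_a(S) := max_{J ⊆ S, |J| = a+1} Δ(J)`. -/
theorem abstention_bound
    {Y : Type*} [Countable Y] [Nonempty Y]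
    (k s : ℕ) (hs1 : 1 ≤ s) (hsk : s ≤ k) (hmaj : k < 2 * s)
    (p : Fin k → Y → ℝ) (hp : ∀ i, IsDist (p i))
    (R : ℕ) (hR : 1 ≤ R) :
    (1 - ∑' y, gmin s p y) ^ R
      ≤ sInf {v : ℝ | ∃ S : Finset (Fin k), S.card = s ∧
          v = (1 - (sSup {w : ℝ | ∃ J ⊆ S, J.card = (k - s) + 1 ∧ w = overlap p J}) / s) ^ R} := by
  obtain ⟨S₀, -, hS₀⟩ := Finset.exists_subset_card_eq
    (s := (Finset.univ : Finset (Fin k))) (n := s) (by simpa using hsk)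
  refine le_csInf ⟨_, S₀, hS₀, rfl⟩ ?_
  rintro _ ⟨S, hS, rfl⟩
  have hs : (0 : ℝ) < s := by exact_mod_cast hs1
  have hZ := tsum_gmin_le_one hs1 hsk hp
  -- `s > k / 2` means `k - s + 1 ≤ s`, so the maximum defining `Δ_a(S)` is over a nonempty family.
  obtain ⟨J₀, hJ₀S, hJ₀⟩ := Finset.exists_subset_card_eq
    (s := S) (n := (k - s) + 1) (by omega)
  have hsup : sSup {w : ℝ | ∃ J ⊆ S, J.card = (k - s) + 1 ∧ w = overlap p J}
      ≤ (∑' y, gmin s p y) * s := by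
    refine csSup_le ⟨_, J₀, hJ₀S, hJ₀, rfl⟩ ?_
    rintro _ ⟨J, -, hJ, rfl⟩
    rw [mul_comm]
    exact overlap_le hs1 hsk hp hJ
  have hdiv := (div_le_iff₀ hs).2 hsup
  exact pow_le_pow_left₀ (by linarith) (by linarith) R
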